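/- Let n, m be nonzero integers, let α ∈ ℂ with α ≠ 2 and α ≠ −2, and let P ∈ ℂ[s,t,u] be the polynomial P = 2 + φ_{|n|}(s)²·φ_{|m|}(t)²·(s² + t² + u² − s·t·u − 4). Then the set of points (s₀,t₀,u₀) ∈ ℂ³ at which P(s₀,t₀,u₀) = α and all three partial derivatives ∂P/∂s, ∂P/∂t, ∂P/∂u vanish (the singular points of the trace surface {P = α}) is finite. -/

import Mathlib

open MvPolynomial

/-- `φ_k`, the Dickson polynomial of the second kind `E_{k-1}(X,1)`:
`φ_1 = 1`, `φ_2 = X`, `φ_{k+1} = X·φ_k − φ_{k−1}`. -/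
noncomputable def phi (k : ℕ) : Polynomial ℂ := Polynomial.dickson 2 (1 : ℂ) (k - 1)

/-!
Let `P = c + F(s) G(t) κ` with `κ = s² + t² + u² - stu - 4`. Away from `P = c`, vanishing of `∂P/∂u`
means `2u = st`, and since `4κ = (2u - st)² - (s² - 4)(t² - 4)`, on that graph
`4(P - c) = -A(s) B(t)` with `A = F·(X² - 4)` and `B = G·(X² - 4)`. Hence at a singular point
`A'(s) = 0` and `B'(t) = 0`; as `A` and `B` are not constant, this leaves finitely many pairs
`(s, t)`, and `u` is determined by them.
-/

theorem eval_aeval_X {R σ : Type*} [CommSemiring R] (v : σ → R) (i : σ) (f : Polynomial R) :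
    eval v (Polynomial.aeval (X i : MvPolynomial σ R) f) = f.eval (v i) := by
  rw [← coe_aeval_eq_eval, RingHom.coe_coe, ← Polynomial.aeval_algHom_apply, aeval_X,
    Polynomial.coe_aeval_eq_eval]

theorem derivative_mul_ne_zero {R : Type*} [Semiring R] [NoZeroDivisors R]
    [IsAddTorsionFree R] {p q : Polynomial R} (hp : p ≠ 0) (hq : 0 < q.natDegree) :
    Polynomial.derivative (p * q) ≠ 0 := by
  intro h
  have hdeg := Polynomial.derivative_eq_zero.1 h
  rw [Polynomial.natDegree_mul hp (Polynomial.ne_zero_of_natDegree_gt hq)] at hdeg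
  omega

theorem finite_setOf_two_mul_eq_mul {R : Type*} [Semiring R] [IsLeftCancelMulZero R]
    [NeZero (2 : R)] {A B : Set R} (hA : A.Finite) (hB : B.Finite) :
    {p : R × R × R | p.1 ∈ A ∧ p.2.1 ∈ B ∧ 2 * p.2.2 = p.1 * p.2.1}.Finite := by
  refine Set.Finite.of_injOn (f := fun p => (p.1, p.2.1)) ?_ ?_ (hA.prod hB)
  · rintro p ⟨hs, ht, -⟩
    exact ⟨hs, ht⟩
  · rintro ⟨s, t, u⟩ ⟨-, -, hu⟩ ⟨s', t', u'⟩ ⟨-, -, hu'⟩ hst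
    obtain ⟨rfl, rfl⟩ := Prod.mk.inj hst
    have huu' : u = u' := mul_left_cancel₀ two_ne_zero (hu.trans hu'.symm)
    rw [huu']

section FrickeCubic

variable {R : Type*} [CommRing R]

/-- The cubic `κ = s² + t² + u² - stu - 4`. By Fricke's identity it is `tr [x, y] - 2` for
`x, y ∈ SL₂` with `s = tr x`, `t = tr y`, `u = tr xy`. The ring is arbitrary, so that `κ` can be
formed both from coordinate functions and from their values. -/
def frickeCubic (s t u : R) : R := s ^ 2 + t ^ 2 + u ^ 2 - s * t * u - 4

theorem frickeCubic_comm (s t u : R) : frickeCubic s t u = frickeCubic t s u := by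
  unfold frickeCubic
  ring

theorem four_mul_frickeCubic (s t u : R) :
    4 * frickeCubic s t u = (2 * u - s * t) ^ 2 - (s ^ 2 - 4) * (t ^ 2 - 4) := by
  unfold frickeCubic
  ring

theorem derivation_frickeCubic {S M : Type*} [CommRing S] [Algebra S R] [AddCommGroup M]
    [Module R M] [Module S M] (D : Derivation S R M) (s t u : R) :
    D (frickeCubic s t u) =
      (2 * s - t * u) • D s + (2 * t - s * u) • D t + (2 * u - s * t) • D u := by
  have h4 : D 4 = 0 := D.map_natCast 4
  simp only [frickeCubic, map_add, map_sub, Derivation.leibniz, Derivation.leibniz_pow, h4]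
  module

theorem eval_derivative_mul_X_sq_sub_four (F : Polynomial R) (s : R) :
    (Polynomial.derivative (F * (Polynomial.X ^ 2 - Polynomial.C 4))).eval s =
      F.derivative.eval s * (s ^ 2 - 4) + F.eval s * (2 * s) := by
  simp [one_add_one_eq_two]

theorem eval_derivative_mul_X_sq_sub_four_eq_zero [NoZeroDivisors R] [NeZero (2 : R)]
    {F : Polynomial R} {s t u : R} (hu : 2 * u = s * t) (hκ : frickeCubic s t u ≠ 0)
    (hs : F.derivative.eval s * frickeCubic s t u + F.eval s * (2 * s - t * u) = 0) :
    (Polynomial.derivative (F * (Polynomial.X ^ 2 - Polynomial.C 4))).eval s = 0 := by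
  have h4κ : 4 * frickeCubic s t u = -((s ^ 2 - 4) * (t ^ 2 - 4)) := by
    rw [four_mul_frickeCubic, hu]
    ring
  have ht : t ^ 2 - 4 ≠ 0 := by
    intro ht
    rw [ht, mul_zero, neg_zero] at h4κ
    have h4 : (4 : R) ≠ 0 := by
      rw [← two_add_two_eq_four, ← mul_two]
      exact mul_ne_zero two_ne_zero two_ne_zero
    exact mul_ne_zero h4 hκ h4κ
  refine (mul_eq_zero.1 ?_).resolve_left ht
  rw [eval_derivative_mul_X_sq_sub_four]
  linear_combination -4 * hs + F.derivative.eval s * h4κ - 2 * t * F.eval s * hu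

end FrickeCubic

section TracePoly

variable {R : Type*} [CommRing R]

/-- The polynomial `c + F(s) G(t) κ(s, t, u)`. The trace polynomial of `[xⁿ, yᵐ]` is the case
`c = 2`, `F = φ_{|n|}²`, `G = φ_{|m|}²`. -/
noncomputable def tracePoly (c : R) (F G : Polynomial R) : MvPolynomial (Fin 3) R :=
  C c + Polynomial.aeval (X 0) F * Polynomial.aeval (X 1) G * frickeCubic (X 0) (X 1) (X 2)

variable (c : R) (F G : Polynomial R) (s t u : R)

theorem eval_frickeCubic_X :
    eval ![s, t, u] (frickeCubic (X 0) (X 1) (X 2)) = frickeCubic s t u := by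
  simp [frickeCubic]

theorem eval_tracePoly :
    eval ![s, t, u] (tracePoly c F G) = c + F.eval s * G.eval t * frickeCubic s t u := by
  simp [tracePoly, eval_aeval_X, eval_frickeCubic_X]

theorem eval_pderiv_zero_tracePoly :
    eval ![s, t, u] (pderiv 0 (tracePoly c F G)) =
      G.eval t * (F.derivative.eval s * frickeCubic s t u + F.eval s * (2 * s - t * u)) := by
  simp only [tracePoly, map_add, map_sub, map_mul, derivation_C, Derivation.leibniz,
    Derivation.map_aeval, derivation_frickeCubic, pderiv_X, Pi.single_eq_same, ne_eq, one_ne_zero,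
    not_false_eq_true, Pi.single_eq_of_ne, Fin.reduceEq, smul_eq_mul, mul_zero, mul_one, zero_add,
    add_zero, eval_aeval_X, eval_frickeCubic_X, eval_ofNat, eval_X, Matrix.cons_val]
  ring

theorem eval_pderiv_one_tracePoly :
    eval ![s, t, u] (pderiv 1 (tracePoly c F G)) =
      F.eval s * (G.derivative.eval t * frickeCubic s t u + G.eval t * (2 * t - s * u)) := by
  simp only [tracePoly, map_add, map_sub, map_mul, derivation_C, Derivation.leibniz,
    Derivation.map_aeval, derivation_frickeCubic, pderiv_X, Pi.single_eq_same, ne_eq, zero_ne_one,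
    not_false_eq_true, Pi.single_eq_of_ne, Fin.reduceEq, smul_eq_mul, mul_zero, mul_one, zero_add,
    add_zero, eval_aeval_X, eval_frickeCubic_X, eval_ofNat, eval_X, Matrix.cons_val]
  ring

theorem eval_pderiv_two_tracePoly :
    eval ![s, t, u] (pderiv 2 (tracePoly c F G)) = F.eval s * G.eval t * (2 * u - s * t) := by
  simp [tracePoly, derivation_frickeCubic, Derivation.map_aeval, eval_aeval_X, pderiv_X]

end TracePoly

section SingularPoints

variable {R : Type*} [CommRing R]

/-- The singular points of the surface `{P = α}` in affine 3-space: the points of the surface at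
which all partial derivatives of `P` vanish. -/
def singularPoints (P : MvPolynomial (Fin 3) R) (α : R) : Set (R × R × R) :=
  {p | eval ![p.1, p.2.1, p.2.2] P = α ∧
    eval ![p.1, p.2.1, p.2.2] (pderiv 0 P) = 0 ∧
    eval ![p.1, p.2.1, p.2.2] (pderiv 1 P) = 0 ∧
    eval ![p.1, p.2.1, p.2.2] (pderiv 2 P) = 0}

theorem singularPoints_tracePoly_subset [NoZeroDivisors R] [NeZero (2 : R)] (F G : Polynomial R)
    {c α : R} (hα : α ≠ c) :
    singularPoints (tracePoly c F G) α ⊆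
      {p | (Polynomial.derivative (F * (Polynomial.X ^ 2 - Polynomial.C 4))).IsRoot p.1 ∧
        (Polynomial.derivative (G * (Polynomial.X ^ 2 - Polynomial.C 4))).IsRoot p.2.1 ∧
        2 * p.2.2 = p.1 * p.2.1} := by
  rintro ⟨s, t, u⟩ ⟨hval, hs, ht, hu⟩
  rw [eval_tracePoly] at hval
  rw [eval_pderiv_zero_tracePoly] at hs
  rw [eval_pderiv_one_tracePoly] at ht
  rw [eval_pderiv_two_tracePoly] at hu
  have hne : F.eval s * G.eval t * frickeCubic s t u ≠ 0 := fun h =>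
    hα (by rw [← hval, h, add_zero])
  have hFG := left_ne_zero_of_mul hne
  have hκ := right_ne_zero_of_mul hne
  have hu : 2 * u = s * t := sub_eq_zero.1 ((mul_eq_zero.1 hu).resolve_left hFG)
  refine ⟨?_, ?_, hu⟩
  · exact eval_derivative_mul_X_sq_sub_four_eq_zero hu hκ
      ((mul_eq_zero.1 hs).resolve_left (right_ne_zero_of_mul hFG))
  · rw [frickeCubic_comm] at hκ ht
    exact eval_derivative_mul_X_sq_sub_four_eq_zero (hu.trans (mul_comm s t)) hκ
      ((mul_eq_zero.1 ht).resolve_left (left_ne_zero_of_mul hFG))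

theorem singularPoints_tracePoly_eq_empty {F G : Polynomial R} {c α : R} (hα : α ≠ c)
    (hFG : F = 0 ∨ G = 0) : singularPoints (tracePoly c F G) α = ∅ := by
  refine Set.eq_empty_of_forall_notMem fun p hp => hα ?_
  rw [← hp.1, eval_tracePoly]
  rcases hFG with rfl | rfl <;> simp

theorem finite_setOf_isRoot_derivative_mul_X_sq_sub_four [IsDomain R] [CharZero R]
    {F : Polynomial R} (hF : F ≠ 0) :
    {s | (Polynomial.derivative (F * (Polynomial.X ^ 2 - Polynomial.C 4))).IsRoot s}.Finite := by
  refine Polynomial.finite_setOfPred_isRoot (derivative_mul_ne_zero hF ?_)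
  rw [Polynomial.natDegree_X_pow_sub_C]
  exact two_pos

theorem singular_points_finite_general [IsDomain R] [CharZero R] (F G : Polynomial R) {c α : R}
    (hα : α ≠ c) : (singularPoints (tracePoly c F G) α).Finite := by
  by_cases hFG : F = 0 ∨ G = 0
  · rw [singularPoints_tracePoly_eq_empty hα hFG]
    exact Set.finite_empty
  obtain ⟨hF, hG⟩ := not_or.1 hFG
  exact (finite_setOf_two_mul_eq_mul (finite_setOf_isRoot_derivative_mul_X_sq_sub_four hF)
    (finite_setOf_isRoot_derivative_mul_X_sq_sub_four hG)).subset
      (singularPoints_tracePoly_subset F G hα)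

end SingularPoints

/-- the set of singular points of the trace surface `{P = α}` is finite,
for `P` the trace polynomial of `[xⁿ,yᵐ]` and `α ≠ ±2`. -/
theorem singular_points_finite (n m : ℤ) (hn : n ≠ 0) (hm : m ≠ 0)
    (α : ℂ) (hα : α ≠ 2) (hα' : α ≠ -2)
    (P : MvPolynomial (Fin 3) ℂ)
    (hP : P = C 2 +
        (Polynomial.aeval (X 0 : MvPolynomial (Fin 3) ℂ) (phi n.natAbs)) ^ 2 *
        (Polynomial.aeval (X 1 : MvPolynomial (Fin 3) ℂ) (phi m.natAbs)) ^ 2 *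
        (X 0 ^ 2 + X 1 ^ 2 + X 2 ^ 2 - X 0 * X 1 * X 2 - 4)) :
    {p : ℂ × ℂ × ℂ |
        eval ![p.1, p.2.1, p.2.2] P = α ∧
        eval ![p.1, p.2.1, p.2.2] (pderiv 0 P) = 0 ∧
        eval ![p.1, p.2.1, p.2.2] (pderiv 1 P) = 0 ∧
        eval ![p.1, p.2.1, p.2.2] (pderiv 2 P) = 0}.Finite := by
  rw [← map_pow, ← map_pow] at hP
  exact hP ▸ singular_points_finite_general (phi n.natAbs ^ 2) (phi m.natAbs ^ 2) hα
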